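/- (ℓ_p quadrilateral inequality.) For every real p ≥ 2 and all vectors a, b, c, d in ℓ_p, ‖a − c‖_p^p + ‖b − d‖_p^p ≤ 2^{p−2}·(‖a − b‖_p^p + ‖b − c‖_p^p + ‖c − d‖_p^p + ‖d − a‖_p^p). -/

import Mathlib

/-!
In an inner product space, superadditivity and convexity of `t ↦ t ^ (p / 2)` turn the parallelogram
law into Clarkson's inequality for `p ≥ 2`, and summing over coordinates carries it over to `ℓ_p`.
The diagonals of a quadrilateral satisfy `2 • (a - c) = u + v` and `2 • (b - d) = u - v`, where
`u = (b - c) - (d - a)` and `v = (a - b) - (c - d)` are differences of opposite sides. Clarkson's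
inequality for `u` and `v`, followed by convexity of `t ↦ t ^ p`, bounds the diagonals by the sides.
-/

open scoped ENNReal NNReal

/-- Clarkson's inequality for the exponent `p`, as a property of a normed group. For `p = 2` it is
one half of the parallelogram law; for `p ≥ 2` it quantifies uniform convexity. -/
def SatisfiesClarkson (p : ℝ) (E : Type*) [NormedAddCommGroup E] : Prop :=
  ∀ u v : E, ‖u + v‖ ^ p + ‖u - v‖ ^ p ≤ 2 ^ (p - 1) * (‖u‖ ^ p + ‖v‖ ^ p)

lemma satisfiesClarkson_of_innerProductSpace (𝕜 : Type*) {E : Type*} [RCLike 𝕜]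
    [NormedAddCommGroup E] [InnerProductSpace 𝕜 E] {p : ℝ} (hp : 2 ≤ p) :
    SatisfiesClarkson p E := by
  intro u v
  have hq : 1 ≤ p / 2 := by linarith
  have rpow_eq_sq_rpow (t : ℝ≥0) : t ^ p = (t ^ 2) ^ (p / 2) := by
    rw [← NNReal.rpow_natCast_mul, Nat.cast_ofNat, mul_div_cancel₀ p two_ne_zero]
  have clarkson_nnnorm :
      ‖u + v‖₊ ^ p + ‖u - v‖₊ ^ p ≤ 2 ^ (p - 1) * (‖u‖₊ ^ p + ‖v‖₊ ^ p) := by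
    simp only [rpow_eq_sq_rpow]
    calc (‖u + v‖₊ ^ 2) ^ (p / 2) + (‖u - v‖₊ ^ 2) ^ (p / 2)
      _ ≤ (‖u + v‖₊ ^ 2 + ‖u - v‖₊ ^ 2) ^ (p / 2) := NNReal.add_rpow_le_rpow_add _ _ hq
      _ = 2 ^ (p / 2) * (‖u‖₊ ^ 2 + ‖v‖₊ ^ 2) ^ (p / 2) := by
        rw [parallelogram_law_with_nnnorm 𝕜, NNReal.mul_rpow]
      _ ≤ 2 ^ (p / 2) * (2 ^ (p / 2 - 1) * ((‖u‖₊ ^ 2) ^ (p / 2) + (‖v‖₊ ^ 2) ^ (p / 2))) := by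
        gcongr
        exact NNReal.rpow_add_le_mul_rpow_add_rpow _ _ hq
      _ = 2 ^ (p - 1) * ((‖u‖₊ ^ 2) ^ (p / 2) + (‖v‖₊ ^ 2) ^ (p / 2)) := by
        rw [← mul_assoc, ← NNReal.rpow_add two_ne_zero, ← add_sub_assoc, add_halves]
  exact_mod_cast clarkson_nnnorm

lemma satisfiesClarkson_lp {ι : Type*} {E : ι → Type*} [∀ i, NormedAddCommGroup (E i)]
    {p : ℝ≥0∞} [Fact (1 ≤ p)] (hp : p ≠ ∞) (hE : ∀ i, SatisfiesClarkson p.toReal (E i)) :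
    SatisfiesClarkson p.toReal (lp E p) := by
  intro f g
  have hasSum_norm (h : lp E p) : HasSum (fun i ↦ ‖h i‖ ^ p.toReal) (‖h‖ ^ p.toReal) :=
    lp.hasSum_norm (p.toReal_pos_iff_ne_top.mpr hp) h
  exact hasSum_le (fun i ↦ hE i (f i) (g i)) ((hasSum_norm (f + g)).add (hasSum_norm (f - g)))
    (((hasSum_norm f).add (hasSum_norm g)).mul_left _)

lemma norm_sub_rpow_le_mul_add_rpow {E : Type*} [SeminormedAddGroup E] {p : ℝ} (hp : 1 ≤ p)
    (u v : E) : ‖u - v‖ ^ p ≤ 2 ^ (p - 1) * (‖u‖ ^ p + ‖v‖ ^ p) := by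
  have le_nnnorm : ‖u - v‖₊ ^ p ≤ 2 ^ (p - 1) * (‖u‖₊ ^ p + ‖v‖₊ ^ p) :=
    (NNReal.rpow_le_rpow (nnnorm_sub_le u v) (by positivity)).trans
      (NNReal.rpow_add_le_mul_rpow_add_rpow _ _ hp)
  exact_mod_cast le_nnnorm

lemma SatisfiesClarkson.quadrilateral_inequality (𝕜 : Type*) {E : Type*} [RCLike 𝕜]
    [NormedAddCommGroup E] [NormedSpace 𝕜 E] {p : ℝ} (hE : SatisfiesClarkson p E) (hp : 1 ≤ p)
    (a b c d : E) :
    ‖a - c‖ ^ p + ‖b - d‖ ^ p ≤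
      2 ^ (p - 2) * (‖a - b‖ ^ p + ‖b - c‖ ^ p + ‖c - d‖ ^ p + ‖d - a‖ ^ p) := by
  have norm_two_nsmul_rpow (x : E) : ‖2 • x‖ ^ p = 2 ^ p * ‖x‖ ^ p := by
    rw [RCLike.norm_nsmul 𝕜, nsmul_eq_mul, Nat.cast_ofNat,
      Real.mul_rpow zero_le_two (norm_nonneg x)]
  let u := (b - c) - (d - a)
  let v := (a - b) - (c - d)
  have add_eq : u + v = 2 • (a - c) := by simp only [u, v]; abel
  have sub_eq : u - v = 2 • (b - d) := by simp only [u, v]; abel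
  have two_rpow_mul : (2 : ℝ) ^ (p - 1) * 2 ^ (p - 1) = 2 ^ p * 2 ^ (p - 2) := by
    rw [← Real.rpow_add two_pos, ← Real.rpow_add two_pos]
    ring_nf
  refine le_of_mul_le_mul_left ?_ (Real.rpow_pos_of_pos two_pos p)
  calc 2 ^ p * (‖a - c‖ ^ p + ‖b - d‖ ^ p)
    _ = ‖u + v‖ ^ p + ‖u - v‖ ^ p := by
      rw [add_eq, sub_eq, norm_two_nsmul_rpow, norm_two_nsmul_rpow, mul_add]
    _ ≤ 2 ^ (p - 1) * (‖u‖ ^ p + ‖v‖ ^ p) := hE u v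
    _ ≤ 2 ^ (p - 1) * (2 ^ (p - 1) * (‖b - c‖ ^ p + ‖d - a‖ ^ p) +
          2 ^ (p - 1) * (‖a - b‖ ^ p + ‖c - d‖ ^ p)) := by
      gcongr <;> exact norm_sub_rpow_le_mul_add_rpow hp _ _
    _ = 2 ^ p * (2 ^ (p - 2) * (‖a - b‖ ^ p + ‖b - c‖ ^ p + ‖c - d‖ ^ p + ‖d - a‖ ^ p)) := by
      linear_combination
        (‖a - b‖ ^ p + ‖b - c‖ ^ p + ‖c - d‖ ^ p + ‖d - a‖ ^ p) * two_rpow_mul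

theorem lp_quadrilateral_inequality_general (𝕜 : Type*) {ι : Type*} {E : ι → Type*} [RCLike 𝕜]
    [∀ i, NormedAddCommGroup (E i)] [∀ i, InnerProductSpace 𝕜 (E i)] {p : ℝ≥0∞}
    (hp : 2 ≤ p.toReal) (a b c d : lp E p) :
    ‖a - c‖ ^ p.toReal + ‖b - d‖ ^ p.toReal ≤
      2 ^ (p.toReal - 2) * (‖a - b‖ ^ p.toReal + ‖b - c‖ ^ p.toReal +
        ‖c - d‖ ^ p.toReal + ‖d - a‖ ^ p.toReal) := by
  have one_le_toReal : 1 ≤ p.toReal := one_le_two.trans hp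
  have p_ne_top : p ≠ ∞ := (ENNReal.toReal_pos_iff.mp (by positivity)).2.ne
  have : Fact (1 ≤ p) := ⟨by simpa using ENNReal.ofReal_le_of_le_toReal one_le_toReal⟩
  have clarkson : SatisfiesClarkson p.toReal (lp E p) :=
    satisfiesClarkson_lp p_ne_top fun _ ↦ satisfiesClarkson_of_innerProductSpace 𝕜 hp
  exact clarkson.quadrilateral_inequality 𝕜 one_le_toReal a b c d

/-- The `ℓ_p` quadrilateral inequality: for `p ≥ 2` and vectors `a, b, c, d` in `ℓ_p`,
`‖a-c‖_p^p + ‖b-d‖_p^p ≤ 2^{p-2}·(‖a-b‖_p^p + ‖b-c‖_p^p + ‖c-d‖_p^p + ‖d-a‖_p^p)`. -/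
theorem lp_quadrilateral_inequality (p : ℝ) (hp : 2 ≤ p)
    (a b c d : lp (fun _ : ℕ => ℝ) (ENNReal.ofReal p)) :
    ‖a - c‖ ^ p + ‖b - d‖ ^ p ≤
      (2 : ℝ) ^ (p - 2) * (‖a - b‖ ^ p + ‖b - c‖ ^ p + ‖c - d‖ ^ p + ‖d - a‖ ^ p) := by
  have toReal_ofReal : (ENNReal.ofReal p).toReal = p := ENNReal.toReal_ofReal (by positivity)
  simpa only [toReal_ofReal] using
    lp_quadrilateral_inequality_general ℝ (hp.trans_eq toReal_ofReal.symm) a b c d
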